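/- arXiv:2401.01971 — 2 statements merged into one kernel-verified Lean document; each statement's English description precedes it below -/
import Mathlib

section
/- Fix T > 0 and an integer β₁ ≥ 1. For n ∈ ℕ let B_n be the (n+1)×(n+1) real matrix with entries (B_n)_{j,k} = I_{k−j}(T) for 1 ≤ j ≤ n+1 and 1 ≤ k ≤ n, and (B_n)_{j,n+1} = I_{n+β₁−j}(T) for 1 ≤ j ≤ n+1. Then, as n → ∞, det B_n = e^{T²/4} (T/2)^{β₁−1} / (β₁−1)! · (1 + O(e^{−cn})), where c may be taken to be any positive constant. -/
open Matrix Real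

/-- The modified Bessel function of integer order `ν`:
`I_ν(T) = (1/π) ∫_0^π e^{T cos θ} cos(νθ) dθ`. -/
noncomputable def besselI (ν : ℤ) (T : ℝ) : ℝ :=
  (1 / Real.pi) * ∫ θ in (0:ℝ)..Real.pi, Real.exp (T * Real.cos θ) * Real.cos ((ν : ℝ) * θ)

noncomputable def bJ (p q : ℝ) (ν : ℤ) : ℝ :=
  (1 / Real.pi) * ∫ θ in (0:ℝ)..Real.pi,
    Real.exp (p * Real.cos θ) * Real.cos ((ν : ℝ) * θ - q * Real.sin θ)

lemma bJ_zero (p : ℝ) (ν : ℤ) : bJ p 0 ν = besselI ν p := by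
  simp [bJ, besselI]

lemma integrand_bound (p x θ : ℝ) :
    ‖Real.exp (p * Real.cos θ) * Real.cos x‖ ≤ Real.exp |p| := by
  rw [norm_mul, Real.norm_eq_abs, Real.norm_eq_abs, Real.abs_exp]
  have h1 : Real.exp (p * Real.cos θ) ≤ Real.exp |p| := by
    apply Real.exp_le_exp.mpr
    calc p * Real.cos θ ≤ |p * Real.cos θ| := le_abs_self _
      _ = |p| * |Real.cos θ| := abs_mul _ _
      _ ≤ |p| * 1 := by gcongr; exact Real.abs_cos_le_one θ
      _ = |p| := mul_one _
  calc _ ≤ Real.exp |p| * 1 := by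
        gcongr
        exact Real.abs_cos_le_one x
    _ = _ := mul_one _

lemma bJ_bound (p q : ℝ) (ν : ℤ) : |bJ p q ν| ≤ Real.exp |p| := by
  unfold bJ
  have h := intervalIntegral.norm_integral_le_of_norm_le_const (a := 0) (b := Real.pi)
    (f := fun θ => Real.exp (p * Real.cos θ) * Real.cos ((ν : ℝ) * θ - q * Real.sin θ))
    (C := Real.exp |p|) (fun θ _ => integrand_bound p _ θ)
  rw [sub_zero, abs_of_pos Real.pi_pos, Real.norm_eq_abs] at h
  rw [abs_mul, abs_of_pos (by positivity : 0 < 1 / Real.pi), one_div, inv_mul_le_iff₀ Real.pi_pos]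
  linarith

lemma bJ_deriv (σ : ℤ) (hσ : σ = 1 ∨ σ = -1) (p q s : ℝ) (ν : ℤ) :
    HasDerivAt (fun s => bJ (p + s) (q + σ * s) ν) (bJ (p + s) (q + σ * s) (ν - σ)) s := by
  unfold bJ
  apply HasDerivAt.const_mul
  refine (intervalIntegral.hasDerivAt_integral_of_dominated_loc_of_deriv_le
    (F := fun s θ => Real.exp ((p + s) * Real.cos θ) *
      Real.cos ((ν : ℝ) * θ - (q + σ * s) * Real.sin θ))
    (F' := fun s θ => Real.exp ((p + s) * Real.cos θ) *
      Real.cos (((ν - σ : ℤ) : ℝ) * θ - (q + σ * s) * Real.sin θ))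
    (s := Metric.ball s 1) (bound := fun _ => Real.exp (|p| + |s| + 1))
    (Metric.ball_mem_nhds s one_pos) ?_ ?_ ?_ ?_ ?_ ?_).2
  · refine Filter.Eventually.of_forall fun x => ?_
    exact (Continuous.aestronglyMeasurable (by fun_prop))
  · exact Continuous.intervalIntegrable (by fun_prop) _ _
  · exact (Continuous.aestronglyMeasurable (by fun_prop))
  · refine Filter.Eventually.of_forall fun θ _ x hx => ?_
    refine (integrand_bound _ _ _).trans (Real.exp_le_exp.mpr ?_)
    have : |x - s| < 1 := by simpa [Real.dist_eq] using hx
    have h1 : |p + x| ≤ |p| + |x| := abs_add_le _ _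
    have h2 : |x| ≤ |x - s| + |s| := by simpa using abs_add_le (x - s) s
    linarith
  · exact intervalIntegrable_const
  · refine Filter.Eventually.of_forall fun θ _ x _ => ?_
    have h1 : HasDerivAt (fun x => (p + x) * Real.cos θ) (Real.cos θ) x := by
      simpa using ((hasDerivAt_id x).const_add p).mul_const (Real.cos θ)
    have h2 : HasDerivAt (fun x => (ν : ℝ) * θ - (q + σ * x) * Real.sin θ)
        (-(σ * Real.sin θ)) x := by
      simpa using ((((hasDerivAt_id x).const_mul (σ : ℝ)).const_add q).mul_const
        (Real.sin θ)).const_sub ((ν : ℝ) * θ)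
    have h3 := h1.exp.mul h2.cos
    refine h3.congr_deriv ?_
    have e : ((ν - σ : ℤ) : ℝ) * θ - (q + σ * x) * Real.sin θ =
      ((ν : ℝ) * θ - (q + σ * x) * Real.sin θ) - σ * θ := by push_cast; ring
    rw [e]
    generalize (ν : ℝ) * θ - (q + σ * x) * Real.sin θ = ψ
    rw [Real.cos_sub]
    rcases hσ with rfl | rfl
    · simp; ring
    · simp; ring

lemma bJ_rec (a b : ℝ) (ν : ℤ) :
    ν * bJ (a + b) (a - b) ν = a * bJ (a + b) (a - b) (ν - 1) - b * bJ (a + b) (a - b) (ν + 1) := by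
  have hi : ∀ μ : ℤ, IntervalIntegrable (fun θ => Real.exp ((a + b) * Real.cos θ) *
      Real.cos ((μ : ℝ) * θ - (a - b) * Real.sin θ)) MeasureTheory.volume 0 Real.pi :=
    fun μ => Continuous.intervalIntegrable (by fun_prop) _ _
  have key : ∫ θ in (0:ℝ)..Real.pi, (ν * (Real.exp ((a + b) * Real.cos θ) *
        Real.cos ((ν : ℝ) * θ - (a - b) * Real.sin θ))
      - a * (Real.exp ((a + b) * Real.cos θ) *
        Real.cos (((ν - 1 : ℤ) : ℝ) * θ - (a - b) * Real.sin θ))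
      + b * (Real.exp ((a + b) * Real.cos θ) *
        Real.cos (((ν + 1 : ℤ) : ℝ) * θ - (a - b) * Real.sin θ))) = 0 := by
    have hd : ∀ θ ∈ Set.uIcc 0 Real.pi, HasDerivAt (fun θ => Real.exp ((a + b) * Real.cos θ) *
        Real.sin ((ν : ℝ) * θ - (a - b) * Real.sin θ)) (ν * (Real.exp ((a + b) * Real.cos θ) *
        Real.cos ((ν : ℝ) * θ - (a - b) * Real.sin θ))
      - a * (Real.exp ((a + b) * Real.cos θ) *
        Real.cos (((ν - 1 : ℤ) : ℝ) * θ - (a - b) * Real.sin θ))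
      + b * (Real.exp ((a + b) * Real.cos θ) *
        Real.cos (((ν + 1 : ℤ) : ℝ) * θ - (a - b) * Real.sin θ))) θ := by
      intro θ _
      have h1 : HasDerivAt (fun θ => (a + b) * Real.cos θ) ((a + b) * (-Real.sin θ)) θ :=
        (Real.hasDerivAt_cos θ).const_mul _
      have h2 : HasDerivAt (fun θ => (ν : ℝ) * θ - (a - b) * Real.sin θ)
          (ν - (a - b) * Real.cos θ) θ := by
        have := ((hasDerivAt_id θ).const_mul (ν : ℝ)).sub
          ((Real.hasDerivAt_sin θ).const_mul (a - b))
        rw [mul_one] at this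
        exact this
      refine (h1.exp.mul h2.sin).congr_deriv ?_
      have e1 : ((ν - 1 : ℤ) : ℝ) * θ - (a - b) * Real.sin θ =
        ((ν : ℝ) * θ - (a - b) * Real.sin θ) - θ := by push_cast; ring
      have e2 : ((ν + 1 : ℤ) : ℝ) * θ - (a - b) * Real.sin θ =
        ((ν : ℝ) * θ - (a - b) * Real.sin θ) + θ := by push_cast; ring
      rw [e1, e2]
      generalize (ν : ℝ) * θ - (a - b) * Real.sin θ = ψ
      rw [Real.cos_sub, Real.cos_add]
      ring
    rw [intervalIntegral.integral_eq_sub_of_hasDerivAt hd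
      (Continuous.intervalIntegrable (by fun_prop) _ _)]
    simp [Real.sin_int_mul_pi]
  rw [intervalIntegral.integral_add (((hi ν).const_mul _).sub ((hi (ν - 1)).const_mul _))
    ((hi (ν + 1)).const_mul _), intervalIntegral.integral_sub ((hi ν).const_mul _)
    ((hi (ν - 1)).const_mul _), intervalIntegral.integral_const_mul,
    intervalIntegral.integral_const_mul, intervalIntegral.integral_const_mul] at key
  unfold bJ
  linear_combination (1 / Real.pi) * key

/-- the two-parameter family with `a = t` fixed -/
noncomputable def bg (t : ℝ) (ν : ℤ) (b : ℝ) : ℝ := bJ (t + b) (t - b) ν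

lemma bg_deriv (t : ℝ) (ν : ℤ) (b : ℝ) : HasDerivAt (bg t ν) (bg t (ν + 1) b) b := by
  have := bJ_deriv (-1) (Or.inr rfl) t t b ν
  simp only [Int.cast_neg, Int.cast_one, neg_one_mul, ← sub_eq_add_neg, sub_neg_eq_add] at this
  exact this

lemma bg_bessel (t : ℝ) (ν : ℤ) : bg t ν t = besselI ν (t + t) := by
  rw [bg, sub_self, bJ_zero]

lemma bJ_zero_zero (a : ℝ) (ha : 0 < a) : bJ a a 0 = 1 ∧ ∀ m : ℕ, bJ a a (-1 - m) = 0 := by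
  have hneg : ∀ a : ℝ, a ≠ 0 → bJ a a (-1) = 0 := by
    intro a ha
    have := bJ_rec a 0 0
    simpa [ha] using this
  have hd : ∀ s, HasDerivAt (fun s => bJ s s 0) (bJ s s (-1)) s := by
    intro s
    simpa using bJ_deriv 1 (Or.inl rfl) 0 0 s 0
  constructor
  · have h := norm_image_sub_le_of_norm_deriv_le_segment' (a := 0) (b := a) (C := 0)
      (f := fun s => bJ s s 0) (f' := fun s => bJ s s (-1))
      (fun x _ => (hd x).hasDerivWithinAt) (by
        intro x hx
        rcases eq_or_ne x 0 with rfl | hx0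
        · simp [bJ]
        · simp [hneg x hx0]) a ⟨ha.le, le_rfl⟩
    have h0 : bJ 0 0 0 = 1 := by simp [bJ, Real.pi_ne_zero]
    simp only [zero_mul, norm_le_zero_iff, h0] at h
    linarith
  · intro m
    induction m with
    | zero => simpa using hneg a ha.ne'
    | succ k ih =>
      have := bJ_rec a 0 (-1 - k)
      simp only [add_zero, sub_zero, ih, mul_zero, zero_mul, zero_eq_mul, ha.ne', false_or] at this
      rw [← this]; congr 1; push_cast; ring

lemma bg_at_zero_neg (t : ℝ) (ht : 0 < t) (ν : ℤ) (hν : ν < 0) : bg t ν 0 = 0 := by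
  have := (bJ_zero_zero t ht).2 (-1 - ν).toNat
  rw [Int.toNat_of_nonneg (by omega)] at this
  simpa [bg] using this

lemma bg_at_zero (t : ℝ) (ht : 0 < t) (m : ℕ) : bg t m 0 = t ^ m / (m.factorial : ℝ) := by
  induction m with
  | zero => simpa [bg] using (bJ_zero_zero t ht).1
  | succ k ih =>
    have := bJ_rec t 0 (k + 1)
    simp only [add_zero, sub_zero, zero_mul, add_sub_cancel_right] at this
    simp only [bg, add_zero, sub_zero] at ih ⊢
    rw [ih] at this
    have hk : ((k : ℝ) + 1) ≠ 0 := by positivity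
    have hf : (k.factorial : ℝ) ≠ 0 := by positivity
    push_cast [Nat.factorial_succ] at this ⊢
    field_simp at this ⊢
    rw [this]; ring

lemma bg_bound (t : ℝ) (ht : 0 < t) (ν : ℤ) (b : ℝ) (hb : b ∈ Set.Icc 0 t) :
    |bg t ν b| ≤ Real.exp (2 * t) := by
  refine (bJ_bound _ _ _).trans (Real.exp_le_exp.mpr ?_)
  rw [abs_of_nonneg (by linarith [hb.1])]; linarith [hb.2]

lemma bg_decay (t : ℝ) (ht : 0 < t) : ∃ C, 0 < C ∧ ∀ (ν : ℤ) (b : ℝ), b ∈ Set.Icc 0 t →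
    |bg t ν b| ≤ C * (1 / (1 + (ν : ℝ) ^ 2)) := by
  set G := Real.exp (2 * t) with hG
  have hGp : 0 < G := Real.exp_pos _
  refine ⟨G + 2 * t * (2 * t * G + G), by positivity, fun ν b hb => ?_⟩
  have h0 : ∀ ν, |bg t ν b| ≤ G := fun ν => bg_bound t ht ν b hb
  have hr : ∀ ν : ℤ, ν * bg t ν b = t * bg t (ν - 1) b - b * bg t (ν + 1) b :=
    fun ν => bJ_rec t b ν
  have comb : ∀ x y K : ℝ, |x| ≤ K → |y| ≤ K → |t * x - b * y| ≤ 2 * t * K := by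
    intro x y K hx hy
    have hK : 0 ≤ K := (abs_nonneg x).trans hx
    calc |t * x - b * y| ≤ |t * x| + |b * y| := abs_sub _ _
      _ = t * |x| + b * |y| := by rw [abs_mul, abs_mul, abs_of_pos ht, abs_of_nonneg hb.1]
      _ ≤ t * K + t * K := by gcongr; exact hb.2
      _ = _ := by ring
  have h1 : ∀ ν : ℤ, |ν * bg t ν b| ≤ 2 * t * G := by
    intro ν; rw [hr]; exact comb _ _ _ (h0 _) (h0 _)
  have h2 : |(ν : ℝ) ^ 2 * bg t ν b| ≤ 2 * t * (2 * t * G + G) := by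
    have e : (ν : ℝ) ^ 2 * bg t ν b =
        t * (((ν - 1 : ℤ) : ℝ) * bg t (ν - 1) b + bg t (ν - 1) b)
        - b * (((ν + 1 : ℤ) : ℝ) * bg t (ν + 1) b - bg t (ν + 1) b) := by
      push_cast
      linear_combination (ν : ℝ) * hr ν
    rw [e]
    apply comb
    · exact (abs_add_le _ _).trans (add_le_add (h1 _) (h0 _))
    · exact (abs_sub _ _).trans (add_le_add (h1 _) (h0 _))
  rw [mul_one_div, le_div_iff₀ (by positivity)]
  rw [abs_mul, abs_of_nonneg (by positivity)] at h2
  have := h0 ν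
  linarith

lemma bg_rowsum (t : ℝ) (ht : 0 < t) : ∃ S, 1 ≤ S ∧ ∀ (n : ℕ) (κ : Fin n → ℤ) (b : ℝ),
    Function.Injective κ → b ∈ Set.Icc 0 t → ∑ k, |bg t (κ k) b| ≤ S := by
  obtain ⟨C, hC, h⟩ := bg_decay t ht
  have hs : Summable fun ν : ℤ => C * (1 / (1 + (ν : ℝ) ^ 2)) := by
    apply Summable.mul_left
    have h0 := (Real.summable_one_div_int_pow (p := 2)).mpr (by norm_num)
    refine Summable.of_norm_bounded_eventually (g := fun n : ℤ => 1 / (n : ℝ) ^ 2) h0 ?_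
    have : ∀ᶠ ν : ℤ in Filter.cofinite, ν ≠ 0 :=
      (Set.finite_singleton (0 : ℤ)).eventually_cofinite_notMem
    filter_upwards [this] with ν hν
    have : (0:ℝ) < (ν : ℝ) ^ 2 := by positivity
    rw [Real.norm_of_nonneg (by positivity)]
    apply one_div_le_one_div_of_le this; linarith
  refine ⟨max 1 (∑' ν : ℤ, C * (1 / (1 + (ν : ℝ) ^ 2))), le_max_left _ _, fun n κ b hκ hb => ?_⟩
  refine le_trans ?_ (le_max_right _ _)
  calc ∑ k, |bg t (κ k) b| ≤ ∑ k, C * (1 / (1 + (κ k : ℝ) ^ 2)) :=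
        Finset.sum_le_sum fun k _ => h _ _ hb
    _ = ∑ ν ∈ Finset.univ.map ⟨κ, hκ⟩, C * (1 / (1 + (ν : ℝ) ^ 2)) := by simp
    _ ≤ _ := hs.sum_le_tsum _ fun ν _ => by positivity

lemma bg_taylor (t : ℝ) (ht : 0 < t) (ν : ℤ) (n : ℕ) (b : ℝ) (hb : b ∈ Set.Icc 0 t) :
    |∑ l ∈ Finset.range (n + 1), (-b) ^ l / (l.factorial : ℝ) * bg t (ν + l) b - bg t ν 0| ≤
      Real.exp (2 * t) * (t ^ n / (n.factorial : ℝ)) * t := by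
  have hd : ∀ n : ℕ, ∀ s, HasDerivAt (fun b => ∑ l ∈ Finset.range (n + 1),
      (-b) ^ l / (l.factorial : ℝ) * bg t (ν + l) b)
      ((-s) ^ n / (n.factorial : ℝ) * bg t (ν + n + 1) s) s := by
    intro n s
    induction n with
    | zero => simpa using bg_deriv t ν s
    | succ k ih =>
      simp_rw [Finset.sum_range_succ _ (k + 1)]
      have h1 : HasDerivAt (fun b : ℝ => (-b) ^ (k + 1) / ((k + 1).factorial : ℝ))
          (-((-s) ^ k / (k.factorial : ℝ))) s := by
        have := (((hasDerivAt_id s).neg).pow (k + 1)).div_const ((k + 1).factorial : ℝ)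
        refine this.congr_deriv ?_
        have hf : (k.factorial : ℝ) ≠ 0 := by positivity
        have hk : ((k : ℝ) + 1) ≠ 0 := by positivity
        push_cast [Nat.factorial_succ]
        simp
        field_simp
      refine (ih.add (h1.mul (bg_deriv t (ν + (k + 1 : ℕ)) s))).congr_deriv ?_
      push_cast
      rw [← add_assoc]
      ring
  have h := norm_image_sub_le_of_norm_deriv_le_segment' (a := 0) (b := t)
    (C := Real.exp (2 * t) * (t ^ n / (n.factorial : ℝ)))
    (fun x _ => (hd n x).hasDerivWithinAt) (by
      intro x hx
      rw [norm_mul, norm_div, norm_pow, norm_neg, Real.norm_eq_abs, Real.norm_eq_abs,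
        Real.norm_eq_abs, abs_of_nonneg hx.1,
        abs_of_nonneg (by positivity : (0:ℝ) ≤ (n.factorial : ℝ)), mul_comm]
      have h3 := hx.1
      have h4 := hx.2.le
      gcongr
      exact bg_bound t ht _ x ⟨hx.1, hx.2.le⟩) b hb
  have e0 : ∑ l ∈ Finset.range (n + 1), (-(0:ℝ)) ^ l / (l.factorial : ℝ) * bg t (ν + l) 0
      = bg t ν 0 := by
    rw [Finset.sum_range_succ']
    simp
  simp only [e0, Real.norm_eq_abs, sub_zero] at h
  refine h.trans ?_
  gcongr
  exact hb.2

lemma abs_det_le_prod {n : ℕ} (M : Matrix (Fin n) (Fin n) ℝ) :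
    |M.det| ≤ ∏ i, ∑ j, |M i j| := by
  rw [← Matrix.det_transpose, Matrix.det_apply']
  refine (Finset.abs_sum_le_sum_abs _ _).trans ?_
  rw [Finset.prod_univ_sum, Fintype.piFinset_univ]
  have h : ∀ σ : Equiv.Perm (Fin n),
      |((Equiv.Perm.sign σ : ℤ) : ℝ) * ∏ i, Mᵀ (σ i) i| = ∏ i, |M i (σ i)| := by
    intro σ
    rw [abs_mul, Finset.abs_prod]
    rcases Int.units_eq_one_or (Equiv.Perm.sign σ) with h | h <;> simp [h]
  rw [Finset.sum_congr rfl fun σ _ => h σ]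
  have : ∑ σ : Equiv.Perm (Fin n), ∏ i, |M i (σ i)| =
      ∑ f ∈ (Finset.univ : Finset (Equiv.Perm (Fin n))).map
        ⟨fun σ : Equiv.Perm (Fin n) => (σ : Fin n → Fin n), DFunLike.coe_injective⟩,
        ∏ i, |M i (f i)| := by simp
  rw [this]
  exact Finset.sum_le_sum_of_subset_of_nonneg (Finset.subset_univ _)
    fun f _ _ => Finset.prod_nonneg fun i _ => abs_nonneg _

lemma hasDerivAt_det {n : ℕ} (M : ℝ → Matrix (Fin n) (Fin n) ℝ) (M' : Matrix (Fin n) (Fin n) ℝ)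
    (x : ℝ) (h : ∀ i j, HasDerivAt (fun x => M x i j) (M' i j) x) :
    HasDerivAt (fun x => (M x).det) (∑ k, ((M x).updateCol k (fun j => M' j k)).det) x := by
  simp_rw [Matrix.det_apply']
  rw [Finset.sum_comm]
  apply HasDerivAt.fun_sum
  intro σ _
  rw [← Finset.mul_sum]
  apply HasDerivAt.const_mul
  have := HasDerivAt.fun_finsetProd (u := Finset.univ) (f := fun i x => M x (σ i) i)
    (f' := fun i => M' (σ i) i) (x := x) (fun i _ => h (σ i) i)
  refine this.congr_deriv ?_
  refine Finset.sum_congr rfl fun k _ => ?_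
  rw [← Finset.prod_erase_mul _ _ (Finset.mem_univ k), smul_eq_mul]
  congr 1
  · refine Finset.prod_congr rfl fun i hi => ?_
    rw [Matrix.updateCol_ne (Finset.ne_of_mem_erase hi)]
  · simp

def kap (n m : ℕ) (k : Fin (n + 1)) : ℤ := if (k : ℕ) < n then (k : ℤ) else (n : ℤ) + m

lemma kap_zero (n : ℕ) (k : Fin (n + 1)) : kap n 0 k = k := by
  unfold kap; split_ifs <;> have := k.2 <;> simp <;> omega

lemma kap_inj (n m : ℕ) : Function.Injective (kap n m) := by
  intro x y h
  unfold kap at h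
  have := x.2
  have := y.2
  ext
  split_ifs at h <;> omega

noncomputable def bB (t : ℝ) (n m : ℕ) (b : ℝ) : Matrix (Fin (n + 1)) (Fin (n + 1)) ℝ :=
  Matrix.of fun j k => bg t (kap n m k - (j : ℤ)) b

noncomputable def bD (t : ℝ) (n : ℕ) (b : ℝ) : ℝ :=
  (Matrix.of fun j k : Fin n => bg t ((k : ℤ) - (j : ℤ)) b).det

lemma bB_zero (t : ℝ) (n : ℕ) (b : ℝ) : (bB t n 0 b).det = bD t (n + 1) b := by
  simp only [bB, bD, kap_zero]

lemma bD_deriv (t : ℝ) (n : ℕ) (b : ℝ) :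
    HasDerivAt (bD t (n + 1)) ((bB t n 1 b).det) b := by
  have h := hasDerivAt_det (n := n + 1)
    (fun b => Matrix.of fun j k : Fin (n + 1) => bg t ((k : ℤ) - (j : ℤ)) b)
    (Matrix.of fun j k : Fin (n + 1) => bg t ((k : ℤ) - (j : ℤ) + 1) b) b
    (fun i j => bg_deriv t _ b)
  refine h.congr_deriv ?_
  rw [Finset.sum_eq_single (Fin.last n)]
  · congr 1
    ext j k
    refine Fin.lastCases ?_ (fun k => ?_) k
    · simp [bB, kap]; congr 1; ring
    · rw [Matrix.updateCol_ne (Fin.castSucc_lt_last k).ne]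
      simp [bB, kap]
  · intro k _ hk
    obtain ⟨k, rfl⟩ := Fin.exists_castSucc_eq.mpr hk
    apply Matrix.det_zero_of_column_eq (i := k.castSucc) (j := k.succ)
      (Fin.castSucc_lt_succ).ne
    intro j
    rw [Matrix.updateCol_self, Matrix.updateCol_ne (Fin.castSucc_lt_succ).ne']
    simp; congr 1; ring
  · simp

lemma bD_at_zero (t : ℝ) (ht : 0 < t) (n : ℕ) : bD t n 0 = 1 := by
  unfold bD
  rw [Matrix.det_of_upperTriangular]
  · have h0 := bg_at_zero t ht 0
    simp at h0
    simp [h0]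
  · intro i j hij
    have : (j : ℕ) < i := hij
    exact bg_at_zero_neg t ht _ (by omega)

lemma bB_main (t : ℝ) (ht : 0 < t) : ∃ S, 1 ≤ S ∧ ∀ (n m : ℕ) (b : ℝ), b ∈ Set.Icc 0 t →
    |(bB t n m b).det - t ^ m / (m.factorial : ℝ) * bD t n b| ≤
      S ^ n * ((n + 1) * (Real.exp (2 * t) * (t ^ n / (n.factorial : ℝ)) * t)) := by
  obtain ⟨S, hS, hrow⟩ := bg_rowsum t ht
  refine ⟨S, hS, fun n m b hb => ?_⟩
  set A := bB t n m b with hA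
  set c : Fin (n + 1) → ℝ := fun i => (-b) ^ (n - (i : ℕ)) / ((n - (i : ℕ)).factorial : ℝ) with hc
  set r : Fin (n + 1) → ℝ := ∑ i, c i • A i with hr
  have hrk : ∀ k, r k = ∑ l ∈ Finset.range (n + 1),
      (-b) ^ l / (l.factorial : ℝ) * bg t ((kap n m k - n) + l) b := by
    intro k
    rw [← Finset.sum_range_reflect, hr, Finset.sum_apply, ← Fin.sum_univ_eq_sum_range
      (fun j => (-b) ^ (n + 1 - 1 - j) / ((n + 1 - 1 - j).factorial : ℝ) *
        bg t ((kap n m k - n) + ((n + 1 - 1 - j : ℕ) : ℤ)) b)]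
    refine Finset.sum_congr rfl fun i _ => ?_
    have := i.2
    simp only [Pi.smul_apply, smul_eq_mul, hc, hA, bB, Matrix.of_apply, add_tsub_cancel_right]
    congr 2
    omega
  set um := t ^ m / (m.factorial : ℝ) with hum
  set e : Fin (n + 1) → ℝ := r - um • (Pi.single (Fin.last n) 1) with he
  have hek : ∀ k, |e k| ≤ Real.exp (2 * t) * (t ^ n / (n.factorial : ℝ)) * t := by
    intro k
    have h1 : um • (Pi.single (Fin.last n) (1:ℝ) : Fin (n + 1) → ℝ) k
        = bg t (kap n m k - n) 0 := by
      refine Fin.lastCases ?_ (fun k => ?_) k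
      · have := bg_at_zero t ht m
        simp [kap, this, hum]
      · rw [bg_at_zero_neg t ht]
        · simp [(Fin.castSucc_lt_last k).ne]
        · simp [kap]
    have h2 : e k = r k - bg t (kap n m k - n) 0 := by
      rw [← h1]; rfl
    rw [h2, hrk]
    exact bg_taylor t ht _ n b hb
  have hdet : A.det = (A.updateRow (Fin.last n) r).det := by
    rw [hr, Matrix.det_updateRow_sum]
    simp [hc]
  have hre : r = um • (Pi.single (Fin.last n) 1) + e := by
    rw [he]; abel
  have hmin : (A.updateRow (Fin.last n) (Pi.single (Fin.last n) 1)).det = bD t n b := by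
    rw [← Matrix.adjugate_apply, Matrix.adjugate_fin_succ_eq_det_submatrix]
    rw [Even.neg_one_pow (by simp), one_mul]
    unfold bD
    congr 1
    ext i j
    simp [hA, bB, kap]
  rw [hdet, hre, Matrix.det_updateRow_add, Matrix.det_updateRow_smul, hmin, add_sub_cancel_left]
  refine (abs_det_le_prod _).trans ?_
  rw [Fin.prod_univ_castSucc]
  refine mul_le_mul ?_ ?_ (Finset.sum_nonneg fun _ _ => abs_nonneg _) (by positivity)
  · calc _ ≤ ∏ i : Fin n, S := by
          refine Finset.prod_le_prod (fun _ _ => Finset.sum_nonneg fun _ _ => abs_nonneg _) ?_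
          intro i _
          rw [Matrix.updateRow_ne (Fin.castSucc_lt_last i).ne]
          exact hrow (n + 1) (fun k => kap n m k - ((i.castSucc : Fin (n + 1)) : ℤ)) b
            (fun x y hxy => kap_inj n m (by simpa using hxy)) hb
      _ = S ^ n := by simp
  · rw [Matrix.updateRow_self]
    refine (Finset.sum_le_sum fun k _ => hek k).trans ?_
    simp

lemma bB_final (t : ℝ) (ht : 0 < t) (m : ℕ) : ∃ S K : ℝ, 0 < S ∧ 0 < K ∧ ∀ n : ℕ,
    |(bB t n m t).det - Real.exp (t ^ 2) * t ^ m / (m.factorial : ℝ)| ≤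
      K * (S ^ n / (n.factorial : ℝ)) := by
  obtain ⟨S, hS, h⟩ := bB_main t ht
  set um := t ^ m / (m.factorial : ℝ) with hum
  have hump : 0 < um := by positivity
  set E := Real.exp (2 * t) * t with hE
  have hEp : 0 < E := by positivity
  set X := Real.exp (t ^ 2) with hX
  have hXp : 0 < X := Real.exp_pos _
  have hSp : 0 < S := by linarith
  refine ⟨S * 2 * t, (1 + um + um * X * ((1 + t) * t)) * E, by positivity, by positivity,
    fun n => ?_⟩
  set ε := E * ((S * 2 * t) ^ n / (n.factorial : ℝ)) with hε
  have hεp : 0 < ε := by positivity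
  have h' : ∀ (m : ℕ) (b : ℝ), b ∈ Set.Icc 0 t →
      |(bB t n m b).det - t ^ m / (m.factorial : ℝ) * bD t n b| ≤ ε := by
    intro m b hb
    refine (h n m b hb).trans ?_
    have h2 : (n : ℝ) + 1 ≤ 2 ^ n := by
      have : n + 1 ≤ 2 ^ n := Nat.lt_two_pow_self
      exact_mod_cast this
    calc S ^ n * ((n + 1) * (Real.exp (2 * t) * (t ^ n / (n.factorial : ℝ)) * t))
        ≤ S ^ n * (2 ^ n * (Real.exp (2 * t) * (t ^ n / (n.factorial : ℝ)) * t)) := by gcongr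
      _ = ε := by rw [hε, hE]; ring
  have h0 : ∀ b ∈ Set.Icc 0 t, |bD t (n + 1) b - bD t n b| ≤ ε := by
    intro b hb
    simpa [bB_zero] using h' 0 b hb
  have hcomb : ∀ (m : ℕ) (b : ℝ), b ∈ Set.Icc 0 t →
      |(bB t n m b).det - t ^ m / (m.factorial : ℝ) * bD t (n + 1) b| ≤
        (1 + t ^ m / (m.factorial : ℝ)) * ε := by
    intro m b hb
    set v := t ^ m / (m.factorial : ℝ) with hv
    have hvp : 0 < v := by positivity
    have e : (bB t n m b).det - v * bD t (n + 1) b =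
      ((bB t n m b).det - v * bD t n b) - v * (bD t (n + 1) b - bD t n b) := by ring
    rw [e]
    refine (abs_sub _ _).trans ?_
    rw [abs_mul, abs_of_pos hvp, add_mul, one_mul]
    exact add_le_add (h' m b hb) (mul_le_mul_of_nonneg_left (h0 b hb) hvp.le)
  have hode : |Real.exp (-(t * t)) * bD t (n + 1) t - 1| ≤ (1 + t) * ε * t := by
    have hd : ∀ s, HasDerivAt (fun b => Real.exp (-(t * b)) * bD t (n + 1) b)
        (Real.exp (-(t * s)) * ((bB t n 1 s).det - t * bD t (n + 1) s)) s := by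
      intro s
      have h1 : HasDerivAt (fun b => -(t * b)) (-t) s := by
        have := ((hasDerivAt_id s).const_mul t).neg
        rw [mul_one] at this
        exact this
      refine (h1.exp.mul (bD_deriv t n s)).congr_deriv ?_
      ring
    have := norm_image_sub_le_of_norm_deriv_le_segment' (a := 0) (b := t) (C := (1 + t) * ε)
      (fun x _ => (hd x).hasDerivWithinAt) (by
        intro x hx
        rw [norm_mul, Real.norm_eq_abs, Real.norm_eq_abs, Real.abs_exp]
        have h1 : Real.exp (-(t * x)) ≤ 1 := by
          apply Real.exp_le_one_iff.mpr
          have := mul_nonneg ht.le hx.1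
          linarith
        have h2 := hcomb 1 x ⟨hx.1, hx.2.le⟩
        simp only [pow_one, Nat.factorial_one, Nat.cast_one, div_one] at h2
        calc _ ≤ 1 * ((1 + t) * ε) := by gcongr
          _ = _ := one_mul _) t ⟨ht.le, le_rfl⟩
    simpa [bD_at_zero t ht] using this
  have hD : |bD t (n + 1) t - X| ≤ X * ((1 + t) * ε * t) := by
    have e : bD t (n + 1) t - X = X * (Real.exp (-(t * t)) * bD t (n + 1) t - 1) := by
      rw [mul_sub, ← mul_assoc, hX, ← Real.exp_add]
      ring_nf
      simp
    rw [e, abs_mul, abs_of_pos hXp]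
    gcongr
  have e : (bB t n m t).det - X * t ^ m / (m.factorial : ℝ) =
      ((bB t n m t).det - um * bD t (n + 1) t) + um * (bD t (n + 1) t - X) := by
    rw [hum]; ring
  rw [e]
  refine (abs_add_le _ _).trans ?_
  rw [abs_mul, abs_of_pos hump]
  calc _ ≤ (1 + um) * ε + um * (X * ((1 + t) * ε * t)) :=
        add_le_add (hcomb m t ⟨ht.le, le_rfl⟩) (mul_le_mul_of_nonneg_left hD hump.le)
    _ = _ := by rw [hε]; ring

/-- Theorem 7.2: asymptotics of the single-bordered Toeplitz determinant of modified Bessel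
functions describing the non-intersection probability of `n+1` continuous time random walks
whose top ending point is gapped by `β₁`. -/
theorem bordered_bessel_toeplitz_asymptotics
    (T : ℝ) (hT : 0 < T) (β₁ : ℕ) (hβ₁ : 1 ≤ β₁) :
    ∀ c > (0:ℝ), ∃ C > (0:ℝ), ∃ N : ℕ, ∀ n : ℕ, N ≤ n →
      |Matrix.det (Matrix.of fun j k : Fin (n + 1) =>
          if (k : ℕ) < n then besselI ((k : ℤ) - (j : ℤ)) T
          else besselI ((n : ℤ) + (β₁ : ℤ) - (j : ℤ) - 1) T) -
        Real.exp (T ^ 2 / 4) * (T / 2) ^ (β₁ - 1) / (Nat.factorial (β₁ - 1) : ℝ)|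
      ≤ C * (Real.exp (T ^ 2 / 4) * (T / 2) ^ (β₁ - 1) / (Nat.factorial (β₁ - 1) : ℝ)) *
        Real.exp (-c * n) := by
  intro c hc
  have ht : 0 < T / 2 := by positivity
  obtain ⟨S, K, hS, hK, h⟩ := bB_final (T / 2) ht (β₁ - 1)
  have e2 : T ^ 2 / 4 = (T / 2) ^ 2 := by ring
  rw [e2]
  set L := Real.exp ((T / 2) ^ 2) * (T / 2) ^ (β₁ - 1) / (Nat.factorial (β₁ - 1) : ℝ) with hL
  have hLp : 0 < L := by positivity
  refine ⟨K * Real.exp (S * Real.exp c) / L, by positivity, 0, fun n _ => ?_⟩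
  have hM : (Matrix.of fun j k : Fin (n + 1) =>
          if (k : ℕ) < n then besselI ((k : ℤ) - (j : ℤ)) T
          else besselI ((n : ℤ) + (β₁ : ℤ) - (j : ℤ) - 1) T) = bB (T / 2) n (β₁ - 1) (T / 2) := by
    ext j k
    simp only [bB, Matrix.of_apply, bg_bessel, add_halves, kap]
    split_ifs with hk
    · rfl
    · congr 1
      omega
  rw [hM]
  refine (h n).trans ?_
  rw [div_mul_cancel₀ _ hLp.ne', mul_assoc]
  gcongr
  have h1 := Real.pow_div_factorial_le_exp (S * Real.exp c) (by positivity) n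
  have h2 : S ^ n / (n.factorial : ℝ) =
      (S * Real.exp c) ^ n / (n.factorial : ℝ) * Real.exp (-c * n) := by
    rw [mul_pow, ← Real.exp_nat_mul, mul_div_right_comm, mul_assoc, ← Real.exp_add]
    ring_nf
    simp
  rw [h2]
  gcongr
end

section
/- Fix T > 0. Then, as n → ∞, the n×n Toeplitz determinant det( I_{j−k}(T) )_{j,k=1}^{n} = e^{T²/4} (1 + O(e^{−cn})), where c may be taken to be any positive constant; that is, for every c > 0 there exists C > 0 such that |det( I_{j−k}(T) )_{j,k=1}^{n} − e^{T²/4}| ≤ C e^{−cn} for all n. -/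
open Matrix Real

namespace SzegoAux

noncomputable def r (k i : ℕ) : ℝ := (k.descFactorial i : ℝ) / (k.factorial : ℝ)

lemma r_succ_succ (k i : ℕ) : r (k+1) (i+1) = r k i := by
  unfold r
  rw [Nat.succ_descFactorial_succ, Nat.factorial_succ]
  have : (k.factorial : ℝ) ≠ 0 := by positivity
  push_cast
  field_simp

lemma r_down (k i : ℕ) : (((k+1 : ℕ) : ℝ) - i) * r (k+1) i = r k i := by
  unfold r
  have h := Nat.succ_descFactorial k i
  have : (k.factorial : ℝ) ≠ 0 := by positivity
  rw [Nat.factorial_succ]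
  rcases le_or_gt i (k+1) with hi | hi
  · have h2 : ((k+1 - i : ℕ) : ℝ) * ((k+1).descFactorial i : ℝ) = (k+1) * (k.descFactorial i : ℝ) := by
      exact_mod_cast h
    rw [Nat.cast_sub hi] at h2
    push_cast at h2 ⊢
    field_simp
    linarith
  · rw [Nat.descFactorial_eq_zero_iff_lt.2 hi, Nat.descFactorial_eq_zero_iff_lt.2 (by omega)]
    simp

lemma r_down_zero (i : ℕ) : (((0 : ℕ) : ℝ) - i) * r 0 i = 0 := by
  cases i <;> simp [r]

noncomputable def G {n : ℕ} (s : Fin n → ℕ) : Matrix (Fin n) (Fin n) ℝ :=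
  Matrix.of fun l i => r (s l) i

noncomputable def g {n : ℕ} (s : Fin n → ℕ) : ℝ := (G s).det

lemma row_col {n : ℕ} (A C : Matrix (Fin n) (Fin n) ℝ) :
    ∑ l, (A.updateRow l (C l)).det = ∑ i, (A.updateCol i (fun l => C l i)).det := by
  have h1 : ∀ l, (A.updateRow l (C l)).det = ∑ i, C l i * A.adjugate i l := by
    intro l
    rw [← cramer_transpose_apply, cramer_eq_adjugate_mulVec, ← adjugate_transpose]
    simp [Matrix.mulVec, dotProduct, mul_comm]
  have h2 : ∀ i, (A.updateCol i (fun l => C l i)).det = ∑ l, C l i * A.adjugate i l := by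
    intro l
    rw [← cramer_apply, cramer_eq_adjugate_mulVec]
    simp [Matrix.mulVec, dotProduct, mul_comm]
  simp_rw [h1, h2]
  exact Finset.sum_comm

lemma G_update {n : ℕ} (s : Fin n → ℕ) (l : Fin n) (k : ℕ) :
    G (Function.update s l k) = (G s).updateRow l (fun i => r k i) := by
  ext a i
  by_cases h : a = l
  · subst h; simp [G]
  · simp [G, h]

/-- sum of `0, …, n-1` -/
noncomputable def b (n : ℕ) : ℝ := ∑ i : Fin n, ((i : ℕ) : ℝ)

lemma g_down {n : ℕ} (s : Fin n → ℕ) :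
    ((∑ l, (s l : ℝ)) - b n) * g s =
      ∑ l, if s l = 0 then 0 else g (Function.update s l (s l - 1)) := by
  have h1 : ∀ l, (if s l = 0 then 0 else g (Function.update s l (s l - 1))) =
      (s l : ℝ) * g s - ((G s).updateRow l (fun i => (i:ℝ) * r (s l) i)).det := by
    intro l
    have e : ((G s).updateRow l (fun i => ((s l : ℝ) - i) * r (s l) i)).det =
       (s l : ℝ) * g s - ((G s).updateRow l (fun i => (i:ℝ) * r (s l) i)).det := by
      have e1 : (fun i : Fin n => ((s l : ℝ) - i) * r (s l) i) =
        (s l : ℝ) • (G s l) + (-1 : ℝ) • (fun i : Fin n => (i:ℝ) * r (s l) i) := by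
        ext i; simp [G]; ring
      rw [e1, det_updateRow_add, det_updateRow_smul, det_updateRow_smul, updateRow_eq_self, g]
      ring
    rw [← e]
    split_ifs with h
    · symm
      apply det_eq_zero_of_row_eq_zero l
      intro j
      simp only [updateRow_self]
      rw [h]; exact r_down_zero j
    · rw [g, G_update]
      congr 2
      ext i
      obtain ⟨k, hk⟩ := Nat.exists_eq_succ_of_ne_zero h
      rw [hk]
      exact (r_down k i).symm
  simp_rw [h1]
  rw [Finset.sum_sub_distrib, row_col (G s) (fun l i => (i:ℝ) * r (s l) i), sub_mul, Finset.sum_mul, b,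
    Finset.sum_mul]
  congr 1
  apply Finset.sum_congr rfl
  intro i _
  have e1 : (fun l : Fin n => (i:ℝ) * r (s l) i) = (i:ℝ) • (fun l => G s l i) := by
    ext l; simp [G]
  rw [e1, det_updateCol_smul, updateCol_eq_self, g]

lemma g_vand {n : ℕ} (s : Fin n → ℕ) :
    (∏ l, ((s l).factorial : ℝ)) * g s = (vandermonde (fun l => (s l : ℝ))).det := by
  rw [det_eval_matrixOfPolynomials_eq_det_vandermonde _ (fun i => descPochhammer ℝ i)
      (fun i => descPochhammer_natDegree ℝ i) (fun i => monic_descPochhammer ℝ i), g, ← det_mul_column]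
  congr 1
  ext l i
  have : ((s l).factorial : ℝ) ≠ 0 := by positivity
  simp only [of_apply, G, r, descPochhammer_eval_eq_descFactorial]
  field_simp

lemma g_ne_zero {n : ℕ} (s : Fin n → ℕ) : g s ≠ 0 ↔ Function.Injective s := by
  have h : g s ≠ 0 ↔ (vandermonde (fun l => (s l : ℝ))).det ≠ 0 := by
    rw [← g_vand, mul_ne_zero_iff]
    have : (∏ l, ((s l).factorial : ℝ)) ≠ 0 := by positivity
    tauto
  rw [h, det_vandermonde_ne_zero_iff]
  exact Nat.cast_injective.of_comp_iff s

noncomputable def q : ℕ → Polynomial ℝ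
  | 0 => 1
  | (i+1) => (Polynomial.X + 1) * (descPochhammer ℝ i).comp (Polynomial.X - 1)

lemma q_prop (i : ℕ) : (q i).Monic ∧ (q i).natDegree = i := by
  cases i with
  | zero => simp [q]
  | succ i =>
    have m1 : (Polynomial.X + 1 : Polynomial ℝ).Monic := Polynomial.monic_X_add_C 1
    have m0 : (Polynomial.X - 1 : Polynomial ℝ).Monic := Polynomial.monic_X_sub_C 1
    have d1 : (Polynomial.X + 1 : Polynomial ℝ).natDegree = 1 := Polynomial.natDegree_X_add_C 1
    have d0 : (Polynomial.X - 1 : Polynomial ℝ).natDegree = 1 := Polynomial.natDegree_X_sub_C 1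
    have m2 : ((descPochhammer ℝ i).comp (Polynomial.X - 1)).Monic :=
      (monic_descPochhammer ℝ i).comp m0 (by rw [d0]; exact one_ne_zero)
    refine ⟨m1.mul m2, ?_⟩
    rw [q, m1.natDegree_mul m2, d1, Polynomial.natDegree_comp, d0, descPochhammer_natDegree]
    ring

lemma g_up {n : ℕ} (s : Fin n → ℕ) :
    ∑ l, g (Function.update s l (s l + 1)) = g s * (1 - ∏ l, ((s l : ℝ) / (s l + 1))) := by
  cases n with
  | zero => simp
  | succ n =>
    have h1 : ∑ l, g (Function.update s l (s l + 1)) =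
        ((G s).updateCol 0 (fun l => r (s l + 1) 0)).det := by
      simp only [g, G_update]
      rw [row_col (G s) (fun l i => r (s l + 1) i), Fin.sum_univ_succ]
      simp only [Fin.val_zero, add_eq_left]
      apply Finset.sum_eq_zero
      intro i _
      apply det_zero_of_column_eq (i := i.succ) (j := i.castSucc) (by simp [Fin.ext_iff])
      intro l
      rw [updateCol_self, updateCol_ne (by simp [Fin.ext_iff])]
      simp [G, r_succ_succ]
    have h2 : g s - ((G s).updateCol 0 (fun l => r (s l + 1) 0)).det =
        ((G s).updateCol 0 (fun l => r (s l) 0 - r (s l + 1) 0)).det := by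
      have e1 : (fun l => r (s l) 0 - r (s l + 1) 0) =
        (fun l => G s l 0) + (-1 : ℝ) • (fun l => r (s l + 1) 0) := by
        ext l; simp [G]; ring
      rw [e1, det_updateCol_add, det_updateCol_smul, updateCol_eq_self, g]
      ring
    have h3 : (∏ l, ((s l + 1).factorial : ℝ)) *
        ((G s).updateCol 0 (fun l => r (s l) 0 - r (s l + 1) 0)).det =
        (∏ l, (s l : ℝ)) * (vandermonde (fun l => (s l : ℝ))).det := by
      rw [det_eval_matrixOfPolynomials_eq_det_vandermonde _ (fun i => q i)
        (fun i => (q_prop i).2) (fun i => (q_prop i).1), ← det_mul_column, ← det_mul_column]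
      congr 1
      ext l i
      have : ((s l).factorial : ℝ) ≠ 0 := by positivity
      refine Fin.cases ?_ (fun i => ?_) i
      · simp [r, q, Nat.factorial_succ]
        field_simp
        ring
      · have e2 := descPochhammer_eval_eq_descFactorial ℝ (s l) (i+1)
        rw [descPochhammer_succ_left] at e2
        simp only [of_apply, updateCol_ne (Fin.succ_ne_zero i), G, r, Fin.val_succ, ← e2, q,
          Nat.factorial_succ, Polynomial.eval_mul, Polynomial.eval_add, Polynomial.eval_X,
          Polynomial.eval_one]
        push_cast
        field_simp
    have h4 : (∏ l, ((s l + 1).factorial : ℝ)) = (∏ l, ((s l : ℝ) + 1)) * ∏ l, ((s l).factorial : ℝ) := by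
      rw [← Finset.prod_mul_distrib]
      simp [Nat.factorial_succ]
    rw [h4, ← g_vand, ← h2, ← h1] at h3
    have p1 : (∏ l, ((s l).factorial : ℝ)) ≠ 0 := by positivity
    have p2 : (∏ l, ((s l : ℝ) + 1)) ≠ 0 := by positivity
    rw [Finset.prod_div_distrib]
    field_simp
    have := mul_left_cancel₀ p1 (by linear_combination h3 : (∏ l, ((s l).factorial : ℝ)) * ((∏ l, ((s l : ℝ) + 1)) * (g s - ∑ l, g (Function.update s l (s l + 1)))) = (∏ l, ((s l).factorial : ℝ)) * ((∏ l, (s l : ℝ)) * g s))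
    linear_combination -this

noncomputable def B (n M : ℕ) : ℝ := ∑ s ∈ Finset.piAntidiag (Finset.univ : Finset (Fin n)) M, g s ^ 2

lemma B_nonneg (n M : ℕ) : 0 ≤ B n M := Finset.sum_nonneg fun _ _ => sq_nonneg _

lemma B_rec (n M : ℕ) : (((M + 1 : ℕ) : ℝ) - b n) * B n (M+1) =
    ∑ s ∈ Finset.piAntidiag (Finset.univ : Finset (Fin n)) M,
      g s ^ 2 * (1 - ∏ l, ((s l : ℝ) / (s l + 1))) := by
  have h1 : (((M + 1 : ℕ) : ℝ) - b n) * B n (M+1) =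
     ∑ l, ∑ s ∈ Finset.piAntidiag (Finset.univ : Finset (Fin n)) (M+1),
       if s l = 0 then 0 else g s * g (Function.update s l (s l - 1)) := by
    rw [Finset.sum_comm, B, Finset.mul_sum]
    apply Finset.sum_congr rfl
    intro s hs
    have e : (((M + 1 : ℕ) : ℝ)) = ∑ l, (s l : ℝ) := by
      rw [← (Finset.mem_piAntidiag.1 hs).1]; push_cast; rfl
    rw [e, sq, ← mul_assoc, g_down, Finset.sum_mul]
    apply Finset.sum_congr rfl
    intro l _
    split_ifs <;> ring
  have h2 : ∑ s ∈ Finset.piAntidiag (Finset.univ : Finset (Fin n)) M,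
      g s ^ 2 * (1 - ∏ l, ((s l : ℝ) / (s l + 1))) =
      ∑ l, ∑ s ∈ Finset.piAntidiag (Finset.univ : Finset (Fin n)) M,
        g s * g (Function.update s l (s l + 1)) := by
    rw [Finset.sum_comm]
    apply Finset.sum_congr rfl
    intro s _
    rw [← Finset.mul_sum, g_up]; ring
  rw [h1, h2]
  apply Finset.sum_congr rfl
  intro l _
  rw [← Finset.sum_filter_ne_zero] 
  rw [← Finset.sum_filter_ne_zero (s := Finset.piAntidiag _ M)]
  have key : ∀ (s : Fin n → ℕ) (k : ℕ), Finset.univ.sum (Function.update s l k) + s l = Finset.univ.sum s + k := by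
    intro s k
    rw [Finset.sum_update_of_mem (Finset.mem_univ l), 
      ← Finset.add_sum_erase _ s (Finset.mem_univ l), Finset.sdiff_singleton_eq_erase]
    omega
  refine Finset.sum_bij' (fun s _ => Function.update s l (s l - 1))
    (fun s _ => Function.update s l (s l + 1)) ?_ ?_ ?_ ?_ ?_
  · intro s hs
    simp only [Finset.mem_filter, Finset.mem_piAntidiag, ne_eq, ite_eq_left_iff, not_forall] at hs ⊢
    obtain ⟨⟨hs1, _⟩, hs2, hs3⟩ := hs
    have := key s (s l - 1)
    refine ⟨⟨by omega, by simp⟩, ?_⟩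
    have e : s l - 1 + 1 = s l := by omega
    simpa [e, mul_comm] using hs3
  · intro s hs
    simp only [Finset.mem_filter, Finset.mem_piAntidiag, ne_eq, ite_eq_left_iff, not_forall] at hs ⊢
    obtain ⟨⟨hs1, _⟩, hs2⟩ := hs
    have := key s (s l + 1)
    refine ⟨⟨by omega, by simp⟩, by simp, ?_⟩
    simpa [mul_comm] using hs2
  · intro s hs
    simp only [Finset.mem_filter, Finset.mem_piAntidiag, ne_eq, ite_eq_left_iff, not_forall] at hs ⊢
    obtain ⟨⟨hs1, _⟩, hs2, hs3⟩ := hs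
    have e : s l - 1 + 1 = s l := by omega
    simp [e]
  · intro s hs
    simp
  · intro s hs
    simp only [Finset.mem_filter, Finset.mem_piAntidiag, ne_eq, ite_eq_left_iff, not_forall] at hs ⊢
    obtain ⟨⟨hs1, _⟩, hs2, hs3⟩ := hs
    have e : s l - 1 + 1 = s l := by omega
    simp [e, hs2, mul_comm]

def bn (n : ℕ) : ℕ := ∑ i : Fin n, (i : ℕ)

lemma b_eq (n : ℕ) : b n = (bn n : ℝ) := by simp [b, bn]

lemma B_zero (n M : ℕ) (h : M < bn n) : B n M = 0 := by
  induction M with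
  | zero =>
    apply Finset.sum_eq_zero
    intro s hs
    have hs0 : ∀ l, s l = 0 := by
      have := (Finset.mem_piAntidiag.1 hs).1
      simpa using this
    have := g_down s
    simp only [hs0] at this
    rw [b_eq] at this
    have hb : (bn n : ℝ) ≠ 0 := by positivity
    simp at this
    rcases this with h | h
    · exact absurd (by exact_mod_cast h) hb
    · simp [h]
  | succ M ih =>
    have h0 := ih (by omega)
    have hr := B_rec n M
    have hz : ∀ s ∈ Finset.piAntidiag (Finset.univ : Finset (Fin n)) M, g s ^ 2 = 0 :=
      (Finset.sum_eq_zero_iff_of_nonneg (fun _ _ => sq_nonneg _)).1 h0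
    rw [Finset.sum_eq_zero (fun s hs => by rw [hz s hs, zero_mul])] at hr
    rcases mul_eq_zero.1 hr with h' | h'
    · rw [b_eq, sub_eq_zero] at h'
      exact absurd (by exact_mod_cast h') h.ne
    · exact h'

lemma g_zero (n : ℕ) (s : Fin n → ℕ) (h : ∑ l, s l < bn n) : g s = 0 := by
  have h0 := B_zero n _ h
  have := (Finset.sum_eq_zero_iff_of_nonneg (fun _ _ => sq_nonneg _)).1 h0 s
    (by simp [Finset.mem_piAntidiag])
  simpa using this

noncomputable def A (n N : ℕ) : ℝ := B n (bn n + N)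

lemma A_le (n N : ℕ) : (N + 1) * A n (N+1) ≤ A n N := by
  have h := B_rec n (bn n + N)
  rw [b_eq] at h
  have e : ((N:ℝ) + 1) * A n (N+1) = (((bn n + N + 1 : ℕ) : ℝ) - bn n) * B n (bn n + N + 1) := by
    rw [A, show bn n + (N+1) = bn n + N + 1 from rfl]; push_cast; ring
  rw [e, h]
  apply Finset.sum_le_sum
  intro s _
  have : 0 ≤ ∏ l, ((s l : ℝ) / (s l + 1)) := by positivity
  nlinarith [sq_nonneg (g s)]

lemma A_eq (n N : ℕ) (hN : N < n) : (N + 1) * A n (N+1) = A n N := by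
  have h := B_rec n (bn n + N)
  rw [b_eq] at h
  have e : ((N:ℝ) + 1) * A n (N+1) = (((bn n + N + 1 : ℕ) : ℝ) - bn n) * B n (bn n + N + 1) := by
    rw [A, show bn n + (N+1) = bn n + N + 1 from rfl]; push_cast; ring
  rw [e, h]
  apply Finset.sum_congr rfl
  intro s hs
  have hs := (Finset.mem_piAntidiag.1 hs).1
  by_cases hz : ∃ l, s l = 0
  · obtain ⟨l, hl⟩ := hz
    rw [Finset.prod_eq_zero (Finset.mem_univ l) (by simp [hl])]
    ring
  · push Not at hz
    have : g s = 0 := by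
      by_contra hg
      have hi := (g_ne_zero s).1 hg
      have : g (fun l => s l - 1) ≠ 0 := by
        rw [g_ne_zero]
        intro a c hac
        have := hz a
        have := hz c
        apply hi
        simp only at hac
        omega
      apply this
      apply g_zero
      have e2 : Finset.univ.sum s = ∑ l, (s l - 1) + n := by
        have : Finset.univ.sum s = ∑ l, ((s l - 1) + 1) := Finset.sum_congr rfl fun l _ => by
          have := hz l; omega
        rw [this, Finset.sum_add_distrib]; simp
      omega
    simp [this]

lemma A_nonneg (n N : ℕ) : 0 ≤ A n N := B_nonneg _ _

lemma A_le' (n N : ℕ) : A n N ≤ A n 0 / N.factorial := by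
  induction N with
  | zero => simp
  | succ N ih =>
    have h := A_le n N
    rw [Nat.factorial_succ]
    push_cast
    rw [le_div_iff₀ (by positivity)] at ih ⊢
    have : (0:ℝ) < N.factorial := by positivity
    nlinarith

lemma A_eq' (n N : ℕ) (hN : N ≤ n) : A n N = A n 0 / N.factorial := by
  induction N with
  | zero => simp
  | succ N ih =>
    have h := A_eq n N (by omega)
    rw [ih (by omega)] at h
    rw [Nat.factorial_succ]
    push_cast
    have : (0:ℝ) < N.factorial := by positivity
    field_simp at h ⊢
    linarith

lemma andreief {n : ℕ} (a : Fin n → ℕ → ℝ) (K : ℕ) :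
    (n.factorial : ℝ) * (Matrix.of fun i j => ∑ k ∈ Finset.range K, a i k * a j k).det =
      ∑ s ∈ Fintype.piFinset (fun _ : Fin n => Finset.range K),
        (Matrix.of fun l i => a i (s l)).det ^ 2 := by
  have h1 : (Matrix.of fun i j => ∑ k ∈ Finset.range K, a i k * a j k).det =
      ∑ s ∈ Fintype.piFinset (fun _ : Fin n => Finset.range K),
        (∏ l, a l (s l)) * (Matrix.of fun l i => a i (s l)).det := by
    have := (detRowAlternating (R := ℝ) (n := Fin n)).toMultilinearMap.map_sum_finset
      (fun i k => fun j => a i k * a j k) (fun _ => Finset.range K)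
    have e : (Matrix.of fun i j => ∑ k ∈ Finset.range K, a i k * a j k) =
        (fun i => ∑ k ∈ Finset.range K, (fun j => a i k * a j k) : Fin n → Fin n → ℝ) := by
      ext i j; simp
    rw [e]
    refine Eq.trans this ?_
    apply Finset.sum_congr rfl
    intro s _
    rw [← det_mul_column]
    rfl
  have h2 : ∀ τ : Equiv.Perm (Fin n), (Matrix.of fun i j => ∑ k ∈ Finset.range K, a i k * a j k).det =
      ∑ s ∈ Fintype.piFinset (fun _ : Fin n => Finset.range K),
        ((τ.sign : ℤ) : ℝ) * (∏ l, a l (s (τ l))) * (Matrix.of fun l i => a i (s l)).det := by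
    intro τ
    rw [h1]
    symm
    refine Finset.sum_bij' (fun s _ => s ∘ τ) (fun s _ => s ∘ τ.symm) ?_ ?_ ?_ ?_ ?_
    · intro s hs; simp only [Fintype.mem_piFinset] at hs ⊢; intro l; exact hs _
    · intro s hs; simp only [Fintype.mem_piFinset] at hs ⊢; intro l; exact hs _
    · intro s hs; ext l; simp
    · intro s hs; ext l; simp
    · intro s hs
      have := det_permute τ (Matrix.of fun l i => a i (s l))
      have e : (Matrix.of fun l i => a i ((s ∘ τ) l)) = (Matrix.of fun l i => a i (s l)).submatrix τ id := by
        ext; simp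
      rw [e, this]
      simp only [Function.comp]
      ring
  have h3 : (n.factorial : ℝ) * (Matrix.of fun i j => ∑ k ∈ Finset.range K, a i k * a j k).det =
      ∑ τ : Equiv.Perm (Fin n), (Matrix.of fun i j => ∑ k ∈ Finset.range K, a i k * a j k).det := by
    rw [Finset.sum_const, Finset.card_univ, Fintype.card_perm, Fintype.card_fin, nsmul_eq_mul]
  rw [h3, Finset.sum_congr rfl (fun τ _ => h2 τ), Finset.sum_comm]
  apply Finset.sum_congr rfl
  intro s _
  rw [← Finset.sum_mul, sq, det_apply']
  congr 1

open Filter Topology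

lemma hasSum_congr_aux {E : Type*} [AddCommMonoid E] [TopologicalSpace E] {f f' : ℕ → E} {c : E}
    (h : ∀ k, f k = f' k) : HasSum f c ↔ HasSum f' c := by
  rw [funext h]

lemma hasSum_of_exhaust {ι : Type*} (F : ι → ℝ) (hF : ∀ s, 0 ≤ F s) (S : ℕ → Finset ι)
    (hS : Tendsto S atTop atTop) (D : ℝ) (h : Tendsto (fun K => ∑ s ∈ S K, F s) atTop (𝓝 D)) :
    HasSum F D := by
  obtain ⟨c, hc⟩ := h.bddAbove_range
  have hs : Summable F := by
    apply summable_of_sum_le (c := c) hF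
    intro u
    obtain ⟨K, hK⟩ := (hS.eventually (eventually_ge_atTop u)).exists
    exact (Finset.sum_le_sum_of_subset_of_nonneg hK (fun i _ _ => hF i)).trans (hc ⟨K, rfl⟩)
  have h2 : Tendsto (fun K => ∑ s ∈ S K, F s) atTop (𝓝 (∑' s, F s)) := hs.hasSum.comp hS
  rw [tendsto_nhds_unique h h2]
  exact hs.hasSum

lemma hasSum_det {n : ℕ} (a : Fin n → ℕ → ℝ) (M : Matrix (Fin n) (Fin n) ℝ)
    (hM : ∀ i j, HasSum (fun k => a i k * a j k) (M i j)) :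
    HasSum (fun s : Fin n → ℕ => (Matrix.of fun l i => a i (s l)).det ^ 2) (n.factorial * M.det) := by
  apply hasSum_of_exhaust _ (fun _ => sq_nonneg _)
    (fun K => Fintype.piFinset (fun _ : Fin n => Finset.range K))
  · apply tendsto_atTop_finset_of_monotone
    · intro K L hKL
      apply Fintype.piFinset_subset
      intro _
      exact Finset.range_mono hKL
    · intro s
      refine ⟨∑ l, s l + 1, ?_⟩
      simp only [Fintype.mem_piFinset, Finset.mem_range]
      intro l
      have := Finset.single_le_sum (f := s) (fun i _ => Nat.zero_le _) (Finset.mem_univ l)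
      omega
  · simp_rw [← andreief]
    apply Tendsto.const_mul
    have hc : Continuous (fun N : Matrix (Fin n) (Fin n) ℝ => N.det) := continuous_id.matrix_det
    refine (hc.tendsto M).comp ?_
    refine tendsto_pi_nhds.2 fun i => tendsto_pi_nhds.2 fun j => ?_
    exact (hM i j).tendsto_sum_nat

lemma hasSum_level {n : ℕ} (F : (Fin n → ℕ) → ℝ) (hF : ∀ s, 0 ≤ F s) (D : ℝ) (h : HasSum F D) :
    HasSum (fun M => ∑ s ∈ Finset.piAntidiag (Finset.univ : Finset (Fin n)) M, F s) D := by
  rw [hasSum_iff_tendsto_nat_of_nonneg (fun M => Finset.sum_nonneg fun s _ => hF s)]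
  have e : ∀ L, ∑ M ∈ Finset.range L, ∑ s ∈ Finset.piAntidiag (Finset.univ : Finset (Fin n)) M, F s =
      ∑ s ∈ (Finset.range L).biUnion (fun M => Finset.piAntidiag (Finset.univ : Finset (Fin n)) M), F s := by
    intro L
    rw [Finset.sum_biUnion]
    intro M _ M' _ hne
    rw [Function.onFun, Finset.disjoint_left]
    intro s hs hs'
    exact hne ((Finset.mem_piAntidiag.1 hs).1.symm.trans (Finset.mem_piAntidiag.1 hs').1)
  simp_rw [e]
  refine h.comp ?_
  apply tendsto_atTop_finset_of_monotone
  · intro K L hKL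
    exact Finset.biUnion_subset_biUnion_of_subset_left _ (Finset.range_mono hKL)
  · intro s
    refine ⟨∑ l, s l + 1, ?_⟩
    simp [Finset.mem_piAntidiag]

noncomputable def a (x : ℝ) (i k : ℕ) : ℝ := x ^ k * (x ^ i)⁻¹ * r k i

lemma det_a {n : ℕ} (x : ℝ) (s : Fin n → ℕ) :
    (Matrix.of fun l i : Fin n => a x i (s l)).det = x ^ (∑ l, s l) * (x ^ bn n)⁻¹ * g s := by
  have e : (Matrix.of fun l i : Fin n => a x i (s l)) =
    Matrix.of fun l i : Fin n => x ^ (s l) * (Matrix.of fun l i : Fin n => (x ^ (i:ℕ))⁻¹ * G s l i) l i := by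
    ext l i; simp [a, G]; ring
  rw [e, det_mul_column, det_mul_row, Finset.prod_pow_eq_pow_sum, Finset.prod_inv_distrib,
    Finset.prod_pow_eq_pow_sum, g, bn]
  ring

lemma hasSum_A {n : ℕ} (x : ℝ) (hx : 0 < x) (M : Matrix (Fin n) (Fin n) ℝ)
    (hM : ∀ i j : Fin n, HasSum (fun k => a x i k * a x j k) (M i j)) :
    HasSum (fun N => A n N * (x ^ 2) ^ N) (n.factorial * M.det) := by
  have h := hasSum_level _ (fun _ => sq_nonneg _) _ (hasSum_det (fun i : Fin n => a x i) M hM)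
  have e : (fun M => ∑ s ∈ Finset.piAntidiag (Finset.univ : Finset (Fin n)) M,
      (Matrix.of fun l i : Fin n => a x i (s l)).det ^ 2) =
      fun M => B n M * (x ^ 2) ^ M * ((x^2) ^ bn n)⁻¹ := by
    ext M
    rw [B, Finset.sum_mul, Finset.sum_mul]
    apply Finset.sum_congr rfl
    intro s hs
    rw [det_a, show ∑ l, s l = M from (Finset.mem_piAntidiag.1 hs).1, mul_pow, mul_pow, inv_pow, 
      pow_right_comm x M, pow_right_comm x (bn n)]
    ring
  rw [e] at h
  rw [← hasSum_nat_add_iff' (bn n)] at h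
  rw [Finset.sum_eq_zero (fun i hi => by rw [B_zero n i (Finset.mem_range.1 hi)]; simp), sub_zero] at h
  refine (hasSum_congr_aux fun N => ?_).mpr h
  rw [A, add_comm (bn n) N, pow_add]
  field_simp

lemma hasSum_E (x : ℝ) (hx : 0 < x) (i : ℕ) (z : ℂ) :
    HasSum (fun k => (a x i k : ℂ) * z ^ k) (Complex.exp (x * z) * z ^ i) := by
  rw [← hasSum_nat_add_iff' i]
  have h0 : ∑ k ∈ Finset.range i, (a x i k : ℂ) * z ^ k = 0 := by
    apply Finset.sum_eq_zero
    intro k hk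
    simp [a, r, Nat.descFactorial_eq_zero_iff_lt.2 (Finset.mem_range.1 hk)]
  rw [h0, sub_zero]
  have h := (NormedSpace.expSeries_div_hasSum_exp (x * z : ℂ)).mul_right (z ^ i)
  rw [← Complex.exp_eq_exp_ℂ] at h
  refine (hasSum_congr_aux fun p => ?_).mpr h
  have hr : r (p + i) i = 1 / p.factorial := by
    rw [r, Nat.descFactorial_eq_div (by omega), Nat.add_sub_cancel, Nat.cast_div]
    · have : ((p+i).factorial : ℝ) ≠ 0 := by positivity
      field_simp
    · exact Nat.factorial_dvd_factorial (by omega)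
    · positivity
  rw [a, hr]
  have : (x : ℂ) ≠ 0 := by exact_mod_cast hx.ne'
  have : (p.factorial : ℂ) ≠ 0 := by exact_mod_cast p.factorial_ne_zero
  push_cast
  rw [pow_add, pow_add, mul_pow]
  field_simp

lemma summable_a (x : ℝ) (hx : 0 < x) (i : ℕ) : Summable (fun k => |a x i k|) := by
  have := (hasSum_E x hx i 1).summable.norm
  simpa using this

noncomputable def e (t : ℝ) : ℂ := Complex.exp (t * Complex.I)

lemma e_norm (t : ℝ) : ‖e t‖ = 1 := Complex.norm_exp_ofReal_mul_I t

lemma e_cont : Continuous e := by unfold e; fun_prop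

lemma int_E (x : ℝ) (hx : 0 < x) (i : ℕ) (ε : ℝ) (h : ℝ → ℂ) (hh : Continuous h) :
    HasSum (fun k => (a x i k : ℂ) * ∫ t in (0:ℝ)..2 * π, (e (ε * t)) ^ k * h t)
      (∫ t in (0:ℝ)..2 * π, Complex.exp (x * e (ε * t)) * e (ε * t) ^ i * h t) := by
  have hec : Continuous fun t : ℝ => e (ε * t) := e_cont.comp (by fun_prop)
  simp_rw [← intervalIntegral.integral_const_mul]
  apply intervalIntegral.hasSum_integral_of_dominated_convergence (fun k t => |a x i k| * ‖h t‖)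
  · intro k
    apply Continuous.aestronglyMeasurable
    fun_prop
  · intro k
    refine Eventually.of_forall fun t _ => ?_
    simp [e_norm]
  · refine Eventually.of_forall fun t _ => ?_
    exact (summable_a x hx i).mul_right _
  · simp_rw [tsum_mul_right]
    apply Continuous.intervalIntegrable
    fun_prop
  · refine Eventually.of_forall fun t _ => ?_
    have := (hasSum_E x hx i (e (ε * t))).mul_right (h t)
    simpa [mul_assoc] using this

lemma orth (m k : ℕ) : ∫ t in (0:ℝ)..2 * π, (e (-1 * t)) ^ m * e (1 * t) ^ k =
    if m = k then (2 * π : ℂ) else 0 := by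
  have h : ∀ t : ℝ, (e (-1 * t)) ^ m * e (1 * t) ^ k = Complex.exp ((((k:ℂ) - m) * Complex.I) * t) := by
    intro t
    rw [e, e, ← Complex.exp_nat_mul, ← Complex.exp_nat_mul, ← Complex.exp_add]
    congr 1
    push_cast; ring
  simp_rw [h]
  split_ifs with hm
  · subst hm; simp
  · have hne : ((k:ℂ) - m) * Complex.I ≠ 0 := by
      apply mul_ne_zero _ Complex.I_ne_zero
      rw [sub_ne_zero]
      exact_mod_cast (Ne.symm hm)
    rw [integral_exp_mul_complex hne]
    have : Complex.exp (((k:ℂ) - m) * Complex.I * ((2 * π : ℝ) : ℂ)) = 1 := by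
      rw [Complex.exp_eq_one_iff]
      exact ⟨(k:ℤ) - m, by push_cast; ring⟩
    rw [this]
    simp

lemma int_one (x : ℝ) (hx : 0 < x) (j k : ℕ) :
    ∫ t in (0:ℝ)..2 * π, Complex.exp (x * e (-1 * t)) * e (-1 * t) ^ j * e (1 * t) ^ k =
      a x j k * (2 * π) := by
  have h := int_E x hx j (-1) (fun t => e (1 * t) ^ k) ((e_cont.comp (by fun_prop)).pow k)
  simp_rw [orth] at h
  refine h.unique ?_
  have := hasSum_ite_eq k ((a x j k : ℂ) * (2 * π))
  refine (hasSum_congr_aux fun m => ?_).mpr this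
  split_ifs with hm
  · rw [hm]
  · simp

lemma integrand (x t : ℝ) (i j : ℕ) :
    (Complex.exp (x * e (1 * t)) * e (1 * t) ^ i * (Complex.exp (x * e (-1 * t)) * e (-1 * t) ^ j)).re =
      Real.exp (2 * x * Real.cos t) * Real.cos ((((i:ℤ) - (j:ℤ) : ℤ) : ℝ) * t) := by
  have h : Complex.exp (x * e (1 * t)) * e (1 * t) ^ i * (Complex.exp (x * e (-1 * t)) * e (-1 * t) ^ j) =
      ((Real.exp (2 * x * Real.cos t) : ℝ) : ℂ) *
        Complex.exp (((((i:ℤ) - (j:ℤ) : ℤ) : ℝ) * t : ℝ) * Complex.I) := by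
    have h1 : e (1 * t) ^ i * e (-1 * t) ^ j = Complex.exp (((((i:ℤ) - (j:ℤ) : ℤ) : ℝ) * t : ℝ) * Complex.I) := by
      rw [e, e, ← Complex.exp_nat_mul, ← Complex.exp_nat_mul, ← Complex.exp_add]
      congr 1
      push_cast; ring
    have h2 : Complex.exp (x * e (1 * t)) * Complex.exp (x * e (-1 * t)) =
        ((Real.exp (2 * x * Real.cos t) : ℝ) : ℂ) := by
      rw [← Complex.exp_add]
      push_cast
      congr 1
      rw [Complex.cos, e, e]
      push_cast
      ring_nf
    rw [← h1, ← h2]; ring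
  rw [h, Complex.re_ofReal_mul, Complex.exp_ofReal_mul_I_re]

lemma bessel_two_pi (ν : ℤ) (T : ℝ) :
    ∫ t in (0:ℝ)..2 * π, Real.exp (T * Real.cos t) * Real.cos ((ν : ℝ) * t) =
      besselI ν T * (2 * π) := by
  have hc : Continuous fun t : ℝ => Real.exp (T * Real.cos t) * Real.cos ((ν : ℝ) * t) := by fun_prop
  rw [← intervalIntegral.integral_add_adjacent_intervals (b := π) (hc.intervalIntegrable _ _)
    (hc.intervalIntegrable _ _)]
  have h := intervalIntegral.integral_comp_sub_left (a := 0) (b := π)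
    (fun t : ℝ => Real.exp (T * Real.cos t) * Real.cos ((ν : ℝ) * t)) (2 * π)
  have e1 : ∀ t : ℝ, Real.cos ((ν : ℝ) * (2 * π - t)) = Real.cos (ν * t) := by
    intro t
    rw [mul_sub, Real.cos_int_mul_two_pi_sub]
  simp only [e1, Real.cos_two_pi_sub] at h
  rw [show 2 * π - π = π by ring, sub_zero] at h
  rw [← h, besselI]
  have := Real.pi_ne_zero
  field_simp
  ring

lemma hasSum_bessel (x : ℝ) (hx : 0 < x) (i j : ℕ) :
    HasSum (fun k => a x i k * a x j k) (besselI ((i:ℤ) - (j:ℤ)) (2 * x)) := by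
  have hc : Continuous fun t : ℝ => Complex.exp (x * e (-1 * t)) * e (-1 * t) ^ j := by
    have := e_cont
    fun_prop
  have hc1 : Continuous fun t : ℝ => Complex.exp (x * e (1 * t)) * e (1 * t) ^ i := by
    have := e_cont
    fun_prop
  have h := int_E x hx i 1 _ hc
  have e1 : ∀ k, ∫ t in (0:ℝ)..2 * π, (e (1 * t)) ^ k * (Complex.exp (x * e (-1 * t)) * e (-1 * t) ^ j) =
      a x j k * (2 * π) := by
    intro k
    rw [← int_one x hx]
    congr 1; ext t; ring
  simp_rw [e1] at h
  have h2 := Complex.reCLM.hasSum h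
  have hc2 : Continuous fun t : ℝ => Complex.exp (x * e (1 * t)) * e (1 * t) ^ i *
      (Complex.exp (x * e (-1 * t)) * e (-1 * t) ^ j) := hc1.mul hc
  rw [← ContinuousLinearMap.intervalIntegral_comp_comm _ (hc2.intervalIntegrable _ _)] at h2
  simp only [Complex.reCLM_apply, integrand, bessel_two_pi] at h2
  have h3 := h2.div_const (2 * π)
  have := Real.pi_ne_zero
  rw [mul_div_cancel_right₀ _ (by positivity)] at h3
  refine (hasSum_congr_aux fun k => ?_).mpr h3
  have : ((a x i k : ℂ) * ((a x j k : ℂ) * (2 * π))) = ((a x i k * (a x j k * (2 * π)) : ℝ) : ℂ) := by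
    push_cast; ring
  simp only [Function.comp, Complex.reCLM_apply, this, Complex.ofReal_re]
  field_simp

noncomputable def D (n : ℕ) (T : ℝ) : ℝ :=
  Matrix.det (Matrix.of fun j k : Fin n => besselI ((j : ℤ) - (k : ℤ)) T)

lemma hasSum_D (n : ℕ) (T : ℝ) (hT : 0 < T) :
    HasSum (fun N => A n N * (T ^ 2 / 4) ^ N) (n.factorial * D n T) := by
  have h := hasSum_A (T / 2) (by positivity)
    (Matrix.of fun j k : Fin n => besselI ((j : ℤ) - (k : ℤ)) T) (fun i j => by
      have := hasSum_bessel (T / 2) (by positivity) i j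
      rw [show 2 * (T / 2) = T by ring] at this
      exact this)
  rw [show (T / 2) ^ 2 = T ^ 2 / 4 by ring] at h
  exact h

lemma D_cont (n : ℕ) : Continuous (D n) := by
  unfold D
  apply Continuous.matrix_det
  refine continuous_pi fun i => continuous_pi fun j => ?_
  simp only [of_apply, besselI]
  apply Continuous.mul continuous_const
  apply intervalIntegral.continuous_parametric_intervalIntegral_of_continuous'
  fun_prop

lemma D_zero (n : ℕ) : D n 0 = 1 := by
  have : (Matrix.of fun j k : Fin n => besselI ((j : ℤ) - (k : ℤ)) 0) = 1 := by
    ext i j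
    rw [of_apply, besselI]
    by_cases h : i = j
    · subst h; simp [Real.pi_ne_zero]
    · rw [one_apply_ne h]
      have hne : (((i:ℤ) - (j:ℤ) : ℤ) : ℝ) ≠ 0 := by
        rw [Int.cast_ne_zero, sub_ne_zero]
        intro h'
        exact h (Fin.ext (by exact_mod_cast h'))
      simp only [zero_mul, Real.exp_zero, one_mul]
      rw [intervalIntegral.integral_comp_mul_left (fun t => Real.cos t) hne]
      simp [-Int.cast_sub, Real.sin_int_mul_pi]
  rw [D, this, det_one]

lemma exp_hasSum (y : ℝ) : HasSum (fun N : ℕ => y ^ N / N.factorial) (Real.exp y) := by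
  have := NormedSpace.expSeries_div_hasSum_exp y
  rwa [← Real.exp_eq_exp_ℝ] at this

lemma A_zero (n : ℕ) : A n 0 = n.factorial := by
  have h1 : ∀ T : ℝ, 0 < T → A n 0 ≤ n.factorial * D n T := by
    intro T hT
    have := le_hasSum (hasSum_D n T hT) 0 (fun N _ => mul_nonneg (A_nonneg n N) (by positivity))
    simpa using this
  have h2 : ∀ T : ℝ, 0 < T → n.factorial * D n T ≤ A n 0 * Real.exp (T ^ 2 / 4) := by
    intro T hT
    refine hasSum_le ?_ (hasSum_D n T hT) ((exp_hasSum (T ^ 2 / 4)).mul_left (A n 0))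
    intro N
    have := mul_le_mul_of_nonneg_right (A_le' n N) (by positivity : 0 ≤ (T ^ 2 / 4) ^ N)
    calc _ ≤ _ := this
      _ = _ := by ring
  have t1 : Tendsto (fun T => n.factorial * D n T) (𝓝[>] 0) (𝓝 (n.factorial : ℝ)) := by
    have : Continuous fun T => n.factorial * D n T := continuous_const.mul (D_cont n)
    have := this.tendsto 0
    rw [D_zero, mul_one] at this
    exact this.mono_left nhdsWithin_le_nhds
  have t2 : Tendsto (fun T : ℝ => A n 0 * Real.exp (T ^ 2 / 4)) (𝓝[>] 0) (𝓝 (A n 0)) := by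
    have : Continuous fun T : ℝ => A n 0 * Real.exp (T ^ 2 / 4) := by fun_prop
    have := this.tendsto 0
    simp only [ne_eq, OfNat.ofNat_ne_zero, not_false_eq_true, zero_pow, zero_div, Real.exp_zero,
      mul_one] at this
    exact this.mono_left nhdsWithin_le_nhds
  apply le_antisymm
  · refine ge_of_tendsto t1 ?_
    filter_upwards [self_mem_nhdsWithin] with T hT using h1 T hT
  · refine le_of_tendsto_of_tendsto t1 t2 ?_
    filter_upwards [self_mem_nhdsWithin] with T hT using h2 T hT

lemma main_bound (n : ℕ) (T c : ℝ) (hT : 0 < T) (hc : 0 < c) :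
    |D n T - Real.exp (T ^ 2 / 4)| ≤ Real.exp (T ^ 2 / 4 * Real.exp c) * Real.exp (-c * n) := by
  have hf : (0:ℝ) < n.factorial := by positivity
  have h1 : HasSum (fun N => A n N / n.factorial * (T ^ 2 / 4) ^ N) (D n T) := by
    have := (hasSum_D n T hT).div_const (n.factorial : ℝ)
    rw [mul_div_cancel_left₀ _ hf.ne'] at this
    refine (hasSum_congr_aux fun N => ?_).mpr this
    ring
  have h2 := (exp_hasSum (T ^ 2 / 4)).sub h1
  have h3 := (exp_hasSum (T ^ 2 / 4 * Real.exp c)).mul_right (Real.exp (-c * n))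
  have hA : ∀ N, A n N / n.factorial ≤ 1 / N.factorial := by
    intro N
    have := A_le' n N
    rw [A_zero] at this
    rw [div_le_iff₀ hf]
    calc _ ≤ _ := this
      _ = _ := by ring
  rw [abs_sub_comm, abs_of_nonneg]
  · refine hasSum_le ?_ h2 h3
    intro N
    rcases le_or_gt N n with hN | hN
    · rw [A_eq' n N hN, A_zero]
      have : (T ^ 2 / 4) ^ N / N.factorial - (n.factorial : ℝ) / N.factorial / n.factorial * (T ^ 2 / 4) ^ N = 0 := by
        field_simp
        ring
      rw [this]
      positivity
    · have p : 0 ≤ A n N / n.factorial * (T ^ 2 / 4) ^ N := by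
        have := A_nonneg n N
        positivity
      have e1 : (1:ℝ) ≤ Real.exp c ^ N * Real.exp (-c * n) := by
        rw [← Real.exp_nat_mul, ← Real.exp_add]
        apply Real.one_le_exp
        have : (n:ℝ) ≤ N := by exact_mod_cast hN.le
        nlinarith
      calc (T ^ 2 / 4) ^ N / N.factorial - A n N / n.factorial * (T ^ 2 / 4) ^ N
          ≤ (T ^ 2 / 4) ^ N / N.factorial * 1 := by linarith
        _ ≤ (T ^ 2 / 4) ^ N / N.factorial * (Real.exp c ^ N * Real.exp (-c * n)) := by
            gcongr
        _ = _ := by rw [mul_pow]; ring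
  · refine h2.nonneg ?_
    intro N
    have := mul_le_mul_of_nonneg_right (hA N) (by positivity : 0 ≤ (T ^ 2 / 4) ^ N)
    rw [sub_nonneg]
    calc _ ≤ _ := this
      _ = _ := by ring

end SzegoAux

/-- The strong Szegő limit theorem for the symbol `e^{(T/2)(z + 1/z)}`: the `n × n` Toeplitz
determinant of modified Bessel functions converges to `e^{T²/4}` with an error `O(e^{-cn})`
for every `c > 0`. -/
theorem szego_bessel_toeplitz_asymptotics (T : ℝ) (hT : 0 < T) :
    ∀ c > (0:ℝ), ∃ C > (0:ℝ), ∀ n : ℕ,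
      |Matrix.det (Matrix.of fun j k : Fin n => besselI ((j : ℤ) - (k : ℤ)) T) -
        Real.exp (T ^ 2 / 4)| ≤ C * Real.exp (-c * n) := by
  intro c hc
  exact ⟨Real.exp (T ^ 2 / 4 * Real.exp c), Real.exp_pos _,
    fun n => SzegoAux.main_bound n T c hT hc⟩
end
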